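/- Let α > −1 and n ≥ 1, let ψ be analytic on 𝔻, not identically 0, and φ a nonconstant analytic self-map of 𝔻, and suppose D_{ψ,φ,n} is bounded on A_α². Then D_{ψ,φ,n} is J-symmetric if and only if ψ(z) = a z^n / (n! (1 − c z)^{n+α+2}) and φ(z) = c + b z/(1 − c z), where a = ψ^{(n)}(0) and b = φ′(0) are both nonzero complex numbers and c = φ(0) ∈ 𝔻. -/

import Mathlib

open Complex Metric Set

noncomputable section

/-- The open unit disk in `ℂ`. -/
def unitDisk : Set ℂ := Metric.ball 0 1

/-- `wb2 α j` is `β(j)² = j!·Γ(α+2)/Γ(j+α+2)`, the square of the norm of `z^j` in `A_α²`. -/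
def wb2 (α : ℝ) (j : ℕ) : ℝ :=
  (j.factorial : ℝ) * Real.Gamma (α + 2) / Real.Gamma ((j : ℝ) + α + 2)

/-- The `j`-th Taylor coefficient of `f` at `0`. -/
def tcoeff (f : ℂ → ℂ) (j : ℕ) : ℂ := iteratedDeriv j f 0 / (j.factorial : ℂ)

/-- An abstract model of the weighted Bergman space `A_α²`: a complex Hilbert space `H`
whose elements are (identified with) the analytic functions on the unit disk with
square-summable weighted Taylor coefficients, with the weighted `ℓ²` inner product. -/
structure BergmanModel (α : ℝ) (H : Type) [NormedAddCommGroup H]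
    [InnerProductSpace ℂ H] where
  emb : H →ₗ[ℂ] (ℂ → ℂ)
  analyticOn : ∀ f : H, AnalyticOnNhd ℂ (emb f) unitDisk
  summable_norm : ∀ f : H, Summable (fun j => ‖tcoeff (emb f) j‖ ^ 2 * wb2 α j)
  inj : ∀ f g : H, Set.EqOn (emb f) (emb g) unitDisk → f = g
  exists_rep : ∀ F : ℂ → ℂ, AnalyticOnNhd ℂ F unitDisk →
      Summable (fun j => ‖tcoeff F j‖ ^ 2 * wb2 α j) →
      ∃ f : H, Set.EqOn (emb f) F unitDisk
  inner_eq : ∀ f g : H,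
      (@inner ℂ H _ f g) =
        ∑' j : ℕ, (starRingEnd ℂ) (tcoeff (emb f) j) * tcoeff (emb g) j * (wb2 α j : ℂ)

/-- The derivative-evaluation kernel `K_w^{(m)}(z) = m!·z^m / (β(m)²·(1-conj(w)·z)^(m+α+2))`. -/
def kern (α : ℝ) (m : ℕ) (w z : ℂ) : ℂ :=
  (m.factorial : ℂ) * z ^ m /
    ((wb2 α m : ℂ) * (1 - (starRingEnd ℂ) w * z) ^ ((m : ℂ) + (α : ℂ) + 2))

/-!
Everything is read off on the kernel functions `K_w(z) = (1 - w z)^{-(α+2)}`, normalised so that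
`⟪K_{conj w}, f⟫ = f w` and `J K_w = K_{conj w}`. An operator `T` is `J`-symmetric exactly when
`(T K_w)(z)` is symmetric in `z` and `w`. For `T = D_{ψ,φ,n}` and `s = n + α + 2` this says
`ψ(z) w^n (1 - w φ(z))^{-s} = ψ(w) z^n (1 - z φ(w))^{-s}`. Freezing `z` shows `ψ = z^n g` with `g`
analytic, and the powers of `z` and `w` cancel. Setting `w = 0` then gives
`g(z) = g(0) (1 - φ(0) z)^{-s}`, after which the identity is the `s`-th power of
`(1 - φ(0) w) (1 - z φ(w)) = (1 - φ(0) z) (1 - w φ(z))`; its `w`-derivative at `0` determines `φ`.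
-/

open Filter Topology
open scoped ComplexConjugate

section ComplexPowers

theorem mul_cpow_of_re_pos {x y : ℂ} (hx : 0 < x.re) (hy : 0 < y.re) (s : ℂ) :
    (x * y) ^ s = x ^ s * y ^ s := by
  have hx0 : x ≠ 0 := by rintro rfl; simp at hx
  have hy0 : y ≠ 0 := by rintro rfl; simp at hy
  have hargx := abs_lt.1 (abs_arg_lt_pi_div_two_iff.2 (Or.inl hx))
  have hargy := abs_lt.1 (abs_arg_lt_pi_div_two_iff.2 (Or.inl hy))
  rw [cpow_def_of_ne_zero (mul_ne_zero hx0 hy0), cpow_def_of_ne_zero hx0,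
    cpow_def_of_ne_zero hy0, Complex.log_mul hx0 hy0 ⟨by linarith, by linarith⟩, add_mul,
    Complex.exp_add]

theorem hasDerivAt_unique_of_cpow_eventuallyEq {f g : ℂ → ℂ} {f' g' z s : ℂ} (hs : s ≠ 0)
    (hf : HasDerivAt f f' z) (hg : HasDerivAt g g' z) (hz : f z ∈ slitPlane) (hfg : f z = g z)
    (h : (fun w => f w ^ s) =ᶠ[𝓝 z] fun w => g w ^ s) : f' = g' := by
  have hderiv := (hf.cpow_const hz (c := s)).unique
    ((hg.cpow_const (hfg ▸ hz)).congr_of_eventuallyEq h)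
  have hpow : s * f z ^ (s - 1) ≠ 0 :=
    mul_ne_zero hs (cpow_ne_zero_iff.2 (Or.inl (slitPlane_ne_zero hz)))
  rw [← hfg] at hderiv
  exact mul_left_cancel₀ hpow hderiv

theorem iteratedDeriv_one_sub_mul_cpow_neg (s w : ℂ) (j : ℕ) {z : ℂ} (hz : 1 - w * z ∈ slitPlane) :
    iteratedDeriv j (fun z => (1 - w * z) ^ (-s)) z =
      (ascPochhammer ℂ j).eval s * w ^ j * (1 - w * z) ^ (-(s + j)) := by
  induction j generalizing z with
  | zero => simp
  | succ j ih =>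
    have hlin : HasDerivAt (fun z : ℂ => 1 - w * z) (-w) z := by
      simpa using ((hasDerivAt_id z).const_mul w).const_sub 1
    have hnear : ∀ᶠ u in 𝓝 z, 1 - w * u ∈ slitPlane :=
      hlin.continuousAt.eventually (isOpen_slitPlane.mem_nhds hz)
    have hEq : iteratedDeriv j (fun z => (1 - w * z) ^ (-s)) =ᶠ[𝓝 z] fun u =>
        (ascPochhammer ℂ j).eval s * w ^ j * (1 - w * u) ^ (-(s + j)) :=
      hnear.mono fun _ hu => ih hu
    rw [iteratedDeriv_succ, hEq.deriv_eq, ((hlin.cpow_const hz).const_mul _).deriv,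
      ascPochhammer_succ_eval, show -(s + (j : ℂ)) - 1 = -(s + (j + 1 : ℕ)) by push_cast; ring]
    ring

end ComplexPowers

section IteratedDerivatives

theorem iteratedDeriv_conj_conj {𝕜 : Type*} [RCLike 𝕜] (f : 𝕜 → 𝕜) (j : ℕ) :
    iteratedDeriv j (conj ∘ f ∘ conj) = conj ∘ iteratedDeriv j f ∘ conj := by
  induction j with
  | zero => simp
  | succ j ih => rw [iteratedDeriv_succ, ih, deriv_conj_conj, iteratedDeriv_succ]

theorem iteratedDeriv_pow_mul_zero {𝕜 : Type*} [NontriviallyNormedField 𝕜] {n : ℕ} {g : 𝕜 → 𝕜}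
    (hg : ContDiffAt 𝕜 n g 0) :
    iteratedDeriv n (fun z => z ^ n * g z) 0 = n.factorial * g 0 := by
  rw [iteratedDeriv_fun_mul (by fun_prop) hg, Finset.sum_eq_single n]
  · simp [Nat.descFactorial_self]
  · intro i hi hin
    have : n - i ≠ 0 := by have := Finset.mem_range.1 hi; omega
    simp [this]
  · simp

end IteratedDerivatives

section UnitDisk

theorem isOpen_unitDisk : IsOpen unitDisk := Metric.isOpen_ball

theorem mem_unitDisk {z : ℂ} : z ∈ unitDisk ↔ ‖z‖ < 1 := mem_ball_zero_iff

theorem zero_mem_unitDisk : (0 : ℂ) ∈ unitDisk := by simp [mem_unitDisk]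

theorem conj_mem_unitDisk {z : ℂ} (hz : z ∈ unitDisk) : conj z ∈ unitDisk := by
  simpa [mem_unitDisk] using hz

variable {w z : ℂ}

theorem re_one_sub_mul_pos (hw : w ∈ unitDisk) (hz : z ∈ unitDisk) : 0 < (1 - w * z).re := by
  have hwz : ‖w * z‖ < 1 := by
    rw [norm_mul]
    exact mul_lt_one_of_nonneg_of_lt_one_left (norm_nonneg w) (mem_unitDisk.1 hw)
      (mem_unitDisk.1 hz).le
  have := re_le_norm (w * z)
  simp only [sub_re, one_re]
  linarith

theorem one_sub_mul_mem_slitPlane (hw : w ∈ unitDisk) (hz : z ∈ unitDisk) :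
    1 - w * z ∈ slitPlane :=
  Or.inl (re_one_sub_mul_pos hw hz)

theorem one_sub_mul_ne_zero (hw : w ∈ unitDisk) (hz : z ∈ unitDisk) : 1 - w * z ≠ 0 :=
  slitPlane_ne_zero (one_sub_mul_mem_slitPlane hw hz)

theorem one_sub_mul_cpow_ne_zero (hw : w ∈ unitDisk) (hz : z ∈ unitDisk) (s : ℂ) :
    (1 - w * z) ^ s ≠ 0 :=
  cpow_ne_zero_iff.2 (Or.inl (one_sub_mul_ne_zero hw hz))

theorem tcoeff_congr {f g : ℂ → ℂ} (h : EqOn f g unitDisk) (j : ℕ) : tcoeff f j = tcoeff g j := by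
  rw [tcoeff, tcoeff, h.iteratedDeriv_of_isOpen isOpen_unitDisk j zero_mem_unitDisk]

theorem tcoeff_conj_conj (f : ℂ → ℂ) (j : ℕ) :
    tcoeff (fun z => conj (f (conj z))) j = conj (tcoeff f j) := by
  have := congrFun (iteratedDeriv_conj_conj f j) 0
  simp only [Function.comp_def, map_zero] at this
  simp [tcoeff, this]

theorem hasSum_tcoeff {f : ℂ → ℂ} (hf : AnalyticOnNhd ℂ f unitDisk) (hz : z ∈ unitDisk) :
    HasSum (fun j => tcoeff f j * z ^ j) (f z) := by
  refine (Complex.hasSum_taylorSeries_on_ball hf.differentiableOn hz).congr_fun fun j => ?_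
  simp [tcoeff]
  ring

end UnitDisk

section BergmanKernel

/-- The reproducing kernel of `A_α²`, written without conjugation so that it is analytic and
symmetric in both variables: the function representing evaluation at `w` is
`bergmanKernel α (conj w)`. -/
def bergmanKernel (α : ℝ) (w z : ℂ) : ℂ := (1 - w * z) ^ (-((α : ℂ) + 2))

variable {α : ℝ} {w z : ℂ}

theorem wb2_pos (hα : -2 < α) (j : ℕ) : 0 < wb2 α j :=
  div_pos (mul_pos (mod_cast j.factorial_pos) (Real.Gamma_pos_of_pos (by linarith)))
    (Real.Gamma_pos_of_pos (by linarith [j.cast_nonneg (α := ℝ)]))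

theorem ascPochhammer_eval_add_two (hα : -2 < α) (j : ℕ) :
    (ascPochhammer ℂ j).eval ((α : ℂ) + 2) = j.factorial / wb2 α j := by
  have hpole : ∀ k : ℕ, (α : ℂ) + 2 ≠ -k := fun k h => by
    have hre : α + 2 = -(k : ℝ) := mod_cast h
    have := k.cast_nonneg (α := ℝ)
    linarith
  have hfact : (j.factorial : ℂ) ≠ 0 := mod_cast j.factorial_ne_zero
  rw [← Gamma_add_nat_div_Gamma_eq _ hpole, wb2]
  push_cast [← Complex.Gamma_ofReal]
  rw [div_div_eq_mul_div, mul_div_mul_left _ _ hfact, add_comm _ (j : ℂ), add_assoc]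

theorem ascPochhammer_eval_add_two_ne_zero (hα : -2 < α) (j : ℕ) :
    (ascPochhammer ℂ j).eval ((α : ℂ) + 2) ≠ 0 := by
  rw [ascPochhammer_eval_add_two hα]
  exact div_ne_zero (mod_cast j.factorial_ne_zero) (mod_cast (wb2_pos hα j).ne')

theorem bergmanKernel_conj (hw : w ∈ unitDisk) (hz : z ∈ unitDisk) :
    bergmanKernel α (conj w) (conj z) = conj (bergmanKernel α w z) := by
  have := conj_cpow (1 - w * z) (-((α : ℂ) + 2))
    (slitPlane_arg_ne_pi (one_sub_mul_mem_slitPlane hw hz))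
  simpa [bergmanKernel, conj_ofNat] using this

theorem analyticOnNhd_bergmanKernel (hw : w ∈ unitDisk) :
    AnalyticOnNhd ℂ (bergmanKernel α w) unitDisk := fun _ hz =>
  AnalyticAt.cpow (by fun_prop) analyticAt_const (one_sub_mul_mem_slitPlane hw hz)

theorem tcoeff_bergmanKernel (hα : -2 < α) (w : ℂ) (j : ℕ) :
    tcoeff (bergmanKernel α w) j = w ^ j / wb2 α j := by
  have hfact : (j.factorial : ℂ) ≠ 0 := mod_cast j.factorial_ne_zero
  unfold tcoeff bergmanKernel
  rw [iteratedDeriv_one_sub_mul_cpow_neg _ _ _ (by simp), ascPochhammer_eval_add_two hα]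
  simp only [mul_zero, sub_zero, one_cpow, mul_one]
  field_simp

theorem summable_bergmanKernel (hα : -2 < α) (hw : w ∈ unitDisk) :
    Summable fun j => ‖tcoeff (bergmanKernel α w) j‖ ^ 2 * wb2 α j := by
  -- The sum is `K_r(r)` at the radius `r = ‖w‖`.
  have hr : ((‖w‖ : ℝ) : ℂ) ∈ unitDisk := by simpa [mem_unitDisk] using hw
  have hsum := (hasSum_tcoeff (analyticOnNhd_bergmanKernel (α := α) hr) hr).summable
  refine hsum.norm.congr fun j => ?_
  have hpos := wb2_pos hα j
  simp only [tcoeff_bergmanKernel hα, norm_mul, norm_div, norm_pow, Complex.norm_real, norm_norm,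
    Real.norm_of_nonneg hpos.le]
  field_simp

end BergmanKernel

namespace BergmanModel

variable {α : ℝ} {H : Type} [NormedAddCommGroup H] [InnerProductSpace ℂ H] (M : BergmanModel α H)

/-- The element of `A_α²` whose function is `bergmanKernel α w`, used to test operators on.
It is a junk value unless `w` lies in the unit disk. -/
def kernel (w : ℂ) : H :=
  Classical.epsilon fun k => EqOn (M.emb k) (bergmanKernel α w) unitDisk

/-- `J` is the canonical conjugation `f ↦ conj (f (conj ·))` of `A_α²`. -/
def IsCanonicalConj (J : H → H) : Prop :=
  ∀ f, ∀ z ∈ unitDisk, M.emb (J f) z = conj (M.emb f (conj z))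

variable {M} {w z : ℂ} {J : H → H}

theorem eqOn_emb_kernel (hα : -2 < α) (hw : w ∈ unitDisk) :
    EqOn (M.emb (M.kernel w)) (bergmanKernel α w) unitDisk :=
  Classical.epsilon_spec
    (M.exists_rep _ (analyticOnNhd_bergmanKernel hw) (summable_bergmanKernel hα hw))

theorem inner_kernel_conj (hα : -2 < α) (hw : w ∈ unitDisk) (f : H) :
    inner ℂ (M.kernel (conj w)) f = M.emb f w := by
  rw [M.inner_eq, ← (hasSum_tcoeff (M.analyticOn f) hw).tsum_eq]
  refine tsum_congr fun j => ?_
  have hwb2 : (wb2 α j : ℂ) ≠ 0 := mod_cast (wb2_pos hα j).ne'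
  rw [tcoeff_congr (eqOn_emb_kernel hα (conj_mem_unitDisk hw)), tcoeff_bergmanKernel hα]
  simp only [map_div₀, map_pow, conj_conj, conj_ofReal]
  field_simp

theorem IsCanonicalConj.inner_left_comm (hJ : M.IsCanonicalConj J) (f g : H) :
    inner ℂ (J f) g = inner ℂ (J g) f := by
  have hcoeff (f : H) (j : ℕ) : tcoeff (M.emb (J f)) j = conj (tcoeff (M.emb f) j) := by
    rw [tcoeff_congr (hJ f), tcoeff_conj_conj]
  simp only [M.inner_eq, hcoeff, conj_conj, mul_comm (tcoeff (M.emb f) _)]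

theorem IsCanonicalConj.map_kernel (hα : -2 < α) (hJ : M.IsCanonicalConj J) (hw : w ∈ unitDisk) :
    J (M.kernel w) = M.kernel (conj w) := by
  refine M.inj _ _ fun z hz => ?_
  have hz' := conj_mem_unitDisk hz
  rw [hJ _ z hz, eqOn_emb_kernel hα hw hz', eqOn_emb_kernel hα (conj_mem_unitDisk hw) hz,
    ← bergmanKernel_conj hw hz', conj_conj]

section Adjoint

open ContinuousLinearMap (adjoint adjoint_inner_left adjoint_inner_right)

variable [CompleteSpace H] {T : H →L[ℂ] H}

theorem IsCanonicalConj.emb_conj_adjoint_conj (hα : -2 < α) (hJ : M.IsCanonicalConj J) (f : H)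
    (hw : w ∈ unitDisk) :
    M.emb (J (adjoint T (J f))) w = inner ℂ (J (T (M.kernel w))) f := by
  rw [hJ _ w hw, ← inner_kernel_conj hα (conj_mem_unitDisk hw), conj_conj, adjoint_inner_right,
    inner_conj_symm, hJ.inner_left_comm]

theorem adjoint_kernel_conj (hα : -2 < α) (hJ : M.IsCanonicalConj J) (hw : w ∈ unitDisk)
    (hsymm : ∀ z ∈ unitDisk, M.emb (T (M.kernel w)) z = M.emb (T (M.kernel z)) w) :
    adjoint T (M.kernel (conj w)) = J (T (M.kernel w)) := by
  refine M.inj _ _ fun z hz => ?_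
  rw [hJ _ z hz, hsymm _ (conj_mem_unitDisk hz), ← inner_kernel_conj hα hz, adjoint_inner_right,
    ← inner_conj_symm, inner_kernel_conj hα hw]

theorem IsCanonicalConj.conj_adjoint_conj_eq_iff (hα : -2 < α) (hJ : M.IsCanonicalConj J) :
    (∀ f, J (adjoint T (J f)) = T f) ↔
      ∀ z ∈ unitDisk, ∀ w ∈ unitDisk,
        M.emb (T (M.kernel w)) z = M.emb (T (M.kernel z)) w := by
  refine ⟨fun h z hz w hw => ?_, fun h f => M.inj _ _ fun w hw => ?_⟩
  · rw [← h (M.kernel z), hJ.emb_conj_adjoint_conj hα _ hw, hJ.inner_left_comm,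
      hJ.map_kernel hα hz, inner_kernel_conj hα hz]
  · rw [hJ.emb_conj_adjoint_conj hα f hw,
      ← adjoint_kernel_conj hα hJ hw fun z hz => h z hz w hw, adjoint_inner_left,
      inner_kernel_conj hα hw]

end Adjoint

theorem iteratedDeriv_emb_kernel (hα : -2 < α) (hw : w ∈ unitDisk) (hz : z ∈ unitDisk) (n : ℕ) :
    iteratedDeriv n (M.emb (M.kernel w)) z =
      (ascPochhammer ℂ n).eval ((α : ℂ) + 2) * w ^ n * (1 - w * z) ^ (-((n : ℂ) + α + 2)) := by
  rw [(eqOn_emb_kernel hα hw).iteratedDeriv_of_isOpen isOpen_unitDisk n hz,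
    show (n : ℂ) + α + 2 = (α + 2) + n by ring]
  exact iteratedDeriv_one_sub_mul_cpow_neg _ _ _ (one_sub_mul_mem_slitPlane hw hz)

end BergmanModel

section SymmetricSymbols

/-- The symmetry in `z` and `w` of the kernel `ψ(z) wⁿ (1 - w φ(z))^{-s}`, which for
`s = n + α + 2` expresses the `J`-symmetry of `D_{ψ,φ,n}` in terms of its symbols. The negative
powers have been cleared. -/
def IsSymmetricSymbol (s : ℂ) (n : ℕ) (ψ φ : ℂ → ℂ) : Prop :=
  ∀ z ∈ unitDisk, ∀ w ∈ unitDisk,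
    ψ z * w ^ n * (1 - z * φ w) ^ s = ψ w * z ^ n * (1 - w * φ z) ^ s

variable {s : ℂ} {n : ℕ} {ψ φ g : ℂ → ℂ}

theorem IsSymmetricSymbol.exists_eq_pow_mul (h : IsSymmetricSymbol s n ψ φ)
    (hφ : MapsTo φ unitDisk unitDisk) (hφ0 : AnalyticAt ℂ φ 0) (hψ : ∃ z ∈ unitDisk, ψ z ≠ 0) :
    ∃ g : ℂ → ℂ, AnalyticAt ℂ g 0 ∧ ∀ z ∈ unitDisk, ψ z = z ^ n * g z := by
  obtain ⟨u, hu, hψu⟩ := hψ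
  have hun : u ^ n ≠ 0 := fun hun => by
    have hhalf : (1 / 2 : ℂ) ∈ unitDisk := by norm_num [mem_unitDisk]
    have hzero := h u hu _ hhalf
    rw [hun, mul_zero, zero_mul] at hzero
    exact mul_ne_zero (mul_ne_zero hψu (by simp))
      (one_sub_mul_cpow_ne_zero hu (hφ hhalf) s) hzero
  refine ⟨fun z => ψ u / u ^ n * ((1 - u * φ z) ^ s / (1 - z * φ u) ^ s), ?_, fun z hz => ?_⟩
  · refine analyticAt_const.mul (.div (.cpow (by fun_prop) analyticAt_const ?_)
      (.cpow (by fun_prop) analyticAt_const (by simp)) (by simp))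
    exact one_sub_mul_mem_slitPlane hu (hφ zero_mem_unitDisk)
  · have := one_sub_mul_cpow_ne_zero hz (hφ hu) s
    field_simp
    linear_combination -h u hu z hz

theorem isSymmetricSymbol_iff_of_eq_pow_mul (hc : φ 0 ∈ unitDisk)
    (hφ0 : ContinuousAt φ 0) (hg : ContinuousAt g 0) (hψ : ∀ z ∈ unitDisk, ψ z = z ^ n * g z) :
    IsSymmetricSymbol s n ψ φ ↔ IsSymmetricSymbol s 0 g φ := by
  constructor
  · intro h
    have hne {z w : ℂ} (hz : z ∈ unitDisk) (hz0 : z ≠ 0) (hw : w ∈ unitDisk) (hw0 : w ≠ 0) :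
        g z * (1 - z * φ w) ^ s = g w * (1 - w * φ z) ^ s := by
      have hzw := h z hz w hw
      rw [hψ z hz, hψ w hw] at hzw
      apply mul_left_cancel₀ (mul_ne_zero (pow_ne_zero n hz0) (pow_ne_zero n hw0))
      linear_combination hzw
    have hlim {z : ℂ} (hz : z ∈ unitDisk) (hz0 : z ≠ 0) :
        g z * (1 - z * φ 0) ^ s = g 0 * (1 - 0 * φ z) ^ s := by
      have hleft : ContinuousAt (fun w => g z * (1 - z * φ w) ^ s) 0 :=
        continuousAt_const.mul (.cpow (by fun_prop) continuousAt_const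
          (one_sub_mul_mem_slitPlane hz hc))
      have hright : ContinuousAt (fun w => g w * (1 - w * φ z) ^ s) 0 :=
        hg.mul (.cpow (by fun_prop) continuousAt_const (by simp))
      refine ((hleft.eventuallyEq_nhds_iff_eventuallyEq_nhdsNE hright).1 ?_).self_of_nhds
      filter_upwards [nhdsWithin_le_nhds (isOpen_unitDisk.mem_nhds zero_mem_unitDisk),
        self_mem_nhdsWithin] with w hw hw0 using hne hz hz0 hw hw0
    intro z hz w hw
    simp only [pow_zero, mul_one]
    rcases eq_or_ne z 0 with rfl | hz0 <;> rcases eq_or_ne w 0 with rfl | hw0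
    · rfl
    · exact (hlim hw hw0).symm
    · exact hlim hz hz0
    · exact hne hz hz0 hw hw0
  · intro h z hz w hw
    rw [hψ z hz, hψ w hw]
    linear_combination z ^ n * w ^ n * h z hz w hw

theorem IsSymmetricSymbol.mul_cpow_eq (h : IsSymmetricSymbol s 0 g φ) {z : ℂ}
    (hz : z ∈ unitDisk) : g z * (1 - φ 0 * z) ^ s = g 0 := by
  simpa [mul_comm z] using h z hz 0 zero_mem_unitDisk

theorem isSymmetricSymbol_zero_iff_of_mul_cpow_eq (hφ : MapsTo φ unitDisk unitDisk) (hg0 : g 0 ≠ 0)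
    (hg : ∀ z ∈ unitDisk, g z * (1 - φ 0 * z) ^ s = g 0) :
    IsSymmetricSymbol s 0 g φ ↔ ∀ z ∈ unitDisk, ∀ w ∈ unitDisk,
      ((1 - φ 0 * w) * (1 - z * φ w)) ^ s = ((1 - φ 0 * z) * (1 - w * φ z)) ^ s := by
  have hc := hφ zero_mem_unitDisk
  refine forall₂_congr fun z hz => forall₂_congr fun w hw => ?_
  rw [mul_cpow_of_re_pos (re_one_sub_mul_pos hc hw) (re_one_sub_mul_pos hz (hφ hw)),
    mul_cpow_of_re_pos (re_one_sub_mul_pos hc hz) (re_one_sub_mul_pos hw (hφ hz)),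
    eq_div_of_mul_eq (one_sub_mul_cpow_ne_zero hc hz s) (hg z hz),
    eq_div_of_mul_eq (one_sub_mul_cpow_ne_zero hc hw s) (hg w hw)]
  have := one_sub_mul_cpow_ne_zero hc hz s
  have := one_sub_mul_cpow_ne_zero hc hw s
  field_simp

theorem eq_add_div_of_cpow_eq (hs : s ≠ 0) (hc : φ 0 ∈ unitDisk) (hφ0 : DifferentiableAt ℂ φ 0)
    {z : ℂ} (hz : z ∈ unitDisk)
    (h : ∀ w ∈ unitDisk,
      ((1 - φ 0 * w) * (1 - z * φ w)) ^ s = ((1 - φ 0 * z) * (1 - w * φ z)) ^ s) :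
    φ z = φ 0 + deriv φ 0 * z / (1 - φ 0 * z) := by
  have hleft : HasDerivAt (fun w => (1 - φ 0 * w) * (1 - z * φ w))
      (-φ 0 * (1 - z * φ 0) - z * deriv φ 0) 0 := by
    convert! (((hasDerivAt_id (0 : ℂ)).const_mul (φ 0)).const_sub 1).mul
      ((hφ0.hasDerivAt.const_mul z).const_sub 1) using 1
    simp [sub_eq_add_neg]
  have hright : HasDerivAt (fun w => (1 - φ 0 * z) * (1 - w * φ z)) (-((1 - φ 0 * z) * φ z)) 0 := by
    convert! (((hasDerivAt_id (0 : ℂ)).mul_const (φ z)).const_sub 1).const_mul (1 - φ 0 * z) using 1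
    simp
  have hderiv := hasDerivAt_unique_of_cpow_eventuallyEq hs hleft hright
    (by simpa using one_sub_mul_mem_slitPlane hz hc) (by simp [mul_comm])
    (eventually_of_mem (isOpen_unitDisk.mem_nhds zero_mem_unitDisk) h)
  have := one_sub_mul_ne_zero hc hz
  field_simp
  linear_combination hderiv

theorem one_sub_mul_mul_one_sub_mul_comm {b c z w : ℂ} (hz : 1 - c * z ≠ 0) (hw : 1 - c * w ≠ 0) :
    (1 - c * w) * (1 - z * (c + b * w / (1 - c * w))) =
      (1 - c * z) * (1 - w * (c + b * z / (1 - c * z))) := by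
  field_simp
  ring

theorem isSymmetricSymbol_zero_iff (hs : s ≠ 0) (hφ : MapsTo φ unitDisk unitDisk)
    (hφ0 : DifferentiableAt ℂ φ 0) (hg0 : g 0 ≠ 0) :
    IsSymmetricSymbol s 0 g φ ↔ (∀ z ∈ unitDisk, g z * (1 - φ 0 * z) ^ s = g 0) ∧
      ∀ z ∈ unitDisk, φ z = φ 0 + deriv φ 0 * z / (1 - φ 0 * z) := by
  have hc := hφ zero_mem_unitDisk
  constructor
  · intro h
    have hg := fun z (hz : z ∈ unitDisk) => h.mul_cpow_eq hz
    have hpow := (isSymmetricSymbol_zero_iff_of_mul_cpow_eq hφ hg0 hg).1 h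
    exact ⟨hg, fun z hz => eq_add_div_of_cpow_eq hs hc hφ0 hz (hpow z hz)⟩
  · rintro ⟨hg, hφ_eq⟩
    refine (isSymmetricSymbol_zero_iff_of_mul_cpow_eq hφ hg0 hg).2 fun z hz w hw => ?_
    rw [hφ_eq z hz, hφ_eq w hw, one_sub_mul_mul_one_sub_mul_comm
      (one_sub_mul_ne_zero hc hz) (one_sub_mul_ne_zero hc hw)]

theorem IsSymmetricSymbol.symbol_eq (hs : s ≠ 0) (h : IsSymmetricSymbol s n ψ φ)
    (hφ : MapsTo φ unitDisk unitDisk) (hφ0 : AnalyticAt ℂ φ 0) (hψ : ∃ z ∈ unitDisk, ψ z ≠ 0) :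
    iteratedDeriv n ψ 0 ≠ 0 ∧
      (∀ z ∈ unitDisk, ψ z =
        iteratedDeriv n ψ 0 * z ^ n / ((n.factorial : ℂ) * (1 - φ 0 * z) ^ s)) ∧
      ∀ z ∈ unitDisk, φ z = φ 0 + deriv φ 0 * z / (1 - φ 0 * z) := by
  have hc := hφ zero_mem_unitDisk
  have hfact : (n.factorial : ℂ) ≠ 0 := mod_cast n.factorial_ne_zero
  obtain ⟨g, hga, hψg⟩ := h.exists_eq_pow_mul hφ hφ0 hψ
  have hsymm := (isSymmetricSymbol_iff_of_eq_pow_mul hc hφ0.continuousAt hga.continuousAt hψg).1 h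
  have hg0 : g 0 ≠ 0 := fun hg0 => by
    obtain ⟨u, hu, hψu⟩ := hψ
    have hgu : g u = 0 := by
      simpa [hg0, one_sub_mul_cpow_ne_zero hc hu s] using hsymm.mul_cpow_eq hu
    exact hψu (by rw [hψg u hu, hgu, mul_zero])
  have hlead : iteratedDeriv n ψ 0 = n.factorial * g 0 := by
    rw [EqOn.iteratedDeriv_of_isOpen hψg isOpen_unitDisk n zero_mem_unitDisk]
    exact iteratedDeriv_pow_mul_zero hga.contDiffAt
  obtain ⟨hg, hφ_eq⟩ := (isSymmetricSymbol_zero_iff hs hφ hφ0.differentiableAt hg0).1 hsymm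
  refine ⟨hlead ▸ mul_ne_zero hfact hg0, fun z hz => ?_, hφ_eq⟩
  have := one_sub_mul_cpow_ne_zero hc hz s
  rw [hψg z hz, hlead, ← hg z hz]
  field_simp

theorem isSymmetricSymbol_of_symbol_eq (hs : s ≠ 0) (hφ : MapsTo φ unitDisk unitDisk)
    (hφ0 : DifferentiableAt ℂ φ 0) {a : ℂ} (ha : a ≠ 0)
    (hψ_eq : ∀ z ∈ unitDisk, ψ z = a * z ^ n / ((n.factorial : ℂ) * (1 - φ 0 * z) ^ s))
    (hφ_eq : ∀ z ∈ unitDisk, φ z = φ 0 + deriv φ 0 * z / (1 - φ 0 * z)) :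
    IsSymmetricSymbol s n ψ φ := by
  have hc := hφ zero_mem_unitDisk
  have hfact : (n.factorial : ℂ) ≠ 0 := mod_cast n.factorial_ne_zero
  set g : ℂ → ℂ := fun z => a / n.factorial / (1 - φ 0 * z) ^ s with hg_def
  have hg : ContinuousAt g 0 :=
    continuousAt_const.div (.cpow (by fun_prop) continuousAt_const (by simp)) (by simp)
  have hψg : ∀ z ∈ unitDisk, ψ z = z ^ n * g z := fun z hz => by
    rw [hψ_eq z hz, hg_def]
    ring
  rw [isSymmetricSymbol_iff_of_eq_pow_mul hc hφ0.continuousAt hg hψg,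
    isSymmetricSymbol_zero_iff hs hφ hφ0 (by simp [hg_def, ha, hfact])]
  refine ⟨fun z hz => ?_, hφ_eq⟩
  simp [hg_def, one_sub_mul_cpow_ne_zero hc hz s]

end SymmetricSymbols

theorem conj_adjoint_conj_eq_iff_isSymmetricSymbol {α : ℝ} (hα : -2 < α) {n : ℕ} {H : Type}
    [NormedAddCommGroup H] [InnerProductSpace ℂ H] [CompleteSpace H] {M : BergmanModel α H}
    {ψ φ : ℂ → ℂ} (hφ : MapsTo φ unitDisk unitDisk) {T : H →L[ℂ] H}
    (hT : ∀ f : H, ∀ z ∈ unitDisk, M.emb (T f) z = ψ z * iteratedDeriv n (M.emb f) (φ z))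
    {J : H → H} (hJ : M.IsCanonicalConj J) :
    (∀ f, J (ContinuousLinearMap.adjoint T (J f)) = T f) ↔
      IsSymmetricSymbol ((n : ℂ) + α + 2) n ψ φ := by
  rw [hJ.conj_adjoint_conj_eq_iff hα]
  refine forall₂_congr fun z hz => forall₂_congr fun w hw => ?_
  rw [hT _ z hz, hT _ w hw, BergmanModel.iteratedDeriv_emb_kernel hα hw (hφ hz),
    BergmanModel.iteratedDeriv_emb_kernel hα hz (hφ hw), cpow_neg, cpow_neg]
  have := ascPochhammer_eval_add_two_ne_zero hα n
  have := one_sub_mul_cpow_ne_zero hw (hφ hz) ((n : ℂ) + α + 2)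
  have := one_sub_mul_cpow_ne_zero hz (hφ hw) ((n : ℂ) + α + 2)
  field_simp

/-- The range `-2 < α` includes the Hardy space `α = -1`, and `n = 0` gives the weighted
composition operators. -/
theorem stmt_8_general (α : ℝ) (hα : -2 < α) (n : ℕ)
    (H : Type) [NormedAddCommGroup H] [InnerProductSpace ℂ H] [CompleteSpace H]
    (M : BergmanModel α H)
    (ψ : ℂ → ℂ) (hψ0 : ∃ z ∈ unitDisk, ψ z ≠ 0)
    (φ : ℂ → ℂ) (hφa : AnalyticOnNhd ℂ φ unitDisk)
    (hφm : ∀ z ∈ unitDisk, φ z ∈ unitDisk)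
    (hφnc : ∃ z ∈ unitDisk, ∃ w ∈ unitDisk, φ z ≠ φ w)
    (T : H →L[ℂ] H)
    (hT : ∀ f : H, ∀ z ∈ unitDisk,
      M.emb (T f) z = ψ z * iteratedDeriv n (M.emb f) (φ z))
    (Jm : H → H)
    (hJm : ∀ f : H, ∀ z ∈ unitDisk,
      M.emb (Jm f) z = (starRingEnd ℂ) (M.emb f ((starRingEnd ℂ) z))) :
    (∀ f : H, Jm (ContinuousLinearMap.adjoint T (Jm f)) = T f) ↔
      (iteratedDeriv n ψ 0 ≠ 0 ∧ deriv φ 0 ≠ 0 ∧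
        (∀ z ∈ unitDisk, ψ z = iteratedDeriv n ψ 0 * z ^ n /
          ((n.factorial : ℂ) * (1 - φ 0 * z) ^ ((n : ℂ) + (α : ℂ) + 2))) ∧
        (∀ z ∈ unitDisk, φ z = φ 0 + deriv φ 0 * z / (1 - φ 0 * z))) := by
  have hs : (n : ℂ) + α + 2 ≠ 0 := by
    have : (0 : ℝ) < n + α + 2 := by linarith [n.cast_nonneg (α := ℝ)]
    exact_mod_cast this.ne'
  rw [conj_adjoint_conj_eq_iff_isSymmetricSymbol hα hφm hT hJm]
  constructor
  · intro h
    obtain ⟨ha, hψ_eq, hφ_eq⟩ := h.symbol_eq hs hφm (hφa 0 zero_mem_unitDisk) hψ0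
    refine ⟨ha, fun hb => ?_, hψ_eq, hφ_eq⟩
    obtain ⟨z, hz, w, hw, hzw⟩ := hφnc
    exact hzw (by rw [hφ_eq z hz, hφ_eq w hw, hb]; simp)
  · rintro ⟨ha, -, hψ_eq, hφ_eq⟩
    exact isSymmetricSymbol_of_symbol_eq hs hφm (hφa 0 zero_mem_unitDisk).differentiableAt ha
      hψ_eq hφ_eq

/-- A bounded operator `D_{ψ,φ,n}` on `A_α²` is `J`-symmetric iff
`ψ(z) = a z^n/(n!(1-cz)^{n+α+2})` and `φ(z) = c + bz/(1-cz)`, where `a = ψ⁽ⁿ⁾(0)` and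
`b = φ'(0)` are both nonzero and `c = φ(0) ∈ 𝔻`. -/
theorem stmt_8 (α : ℝ) (hα : -1 < α) (n : ℕ) (hn : 1 ≤ n)
    (H : Type) [NormedAddCommGroup H] [InnerProductSpace ℂ H] [CompleteSpace H]
    (M : BergmanModel α H)
    (ψ : ℂ → ℂ) (hψa : AnalyticOnNhd ℂ ψ unitDisk)
    (hψ0 : ∃ z ∈ unitDisk, ψ z ≠ 0)
    (φ : ℂ → ℂ) (hφa : AnalyticOnNhd ℂ φ unitDisk)
    (hφm : ∀ z ∈ unitDisk, φ z ∈ unitDisk)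
    (hφnc : ∃ z ∈ unitDisk, ∃ w ∈ unitDisk, φ z ≠ φ w)
    (T : H →L[ℂ] H)
    (hT : ∀ f : H, ∀ z ∈ unitDisk,
      M.emb (T f) z = ψ z * iteratedDeriv n (M.emb f) (φ z))
    (Jm : H → H)
    (hJm : ∀ f : H, ∀ z ∈ unitDisk,
      M.emb (Jm f) z = (starRingEnd ℂ) (M.emb f ((starRingEnd ℂ) z))) :
    (∀ f : H, Jm (ContinuousLinearMap.adjoint T (Jm f)) = T f) ↔
      (iteratedDeriv n ψ 0 ≠ 0 ∧ deriv φ 0 ≠ 0 ∧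
        (∀ z ∈ unitDisk, ψ z = iteratedDeriv n ψ 0 * z ^ n /
          ((n.factorial : ℂ) * (1 - φ 0 * z) ^ ((n : ℂ) + (α : ℂ) + 2))) ∧
        (∀ z ∈ unitDisk, φ z = φ 0 + deriv φ 0 * z / (1 - φ 0 * z))) :=
  stmt_8_general α (by linarith) n H M ψ hψ0 φ hφa hφm hφnc T hT Jm hJm
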